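/- There exist a finite set S with four elements, a g-function g on X = S^ℕ satisfying var_n log g ≤ C/n for some constant C > 0 and all n ≥ 1 (in particular Σ_n (var_n log g)² < ∞), such that g admits exactly one g-measure μ, together with a finite set S̃ with three elements and a surjection π : S → S̃ with induced one-block factor map π̂ : X → S̃^ℕ, such that the pushforward measure ν = μ∘π̂⁻¹ is not a g-measure: there is no g-function g̃ on Y = S̃^ℕ for which ν is a g-measure for g̃. -/

import Mathlib

/-!
The symbols `0` and `1` are merged by the factor map, while `2` and `3` act as markers. After `0` and
`2` the letter `0` is free, after `1` and `3` the letter `1` is free. The `g`-function `runG` emits the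
free letter with probability `(1 - u) / 2`, the other letter with probability `1 / 16`, the marker `2`
with probability `1 / 4` if the past starts with `0` and `1 / 8` otherwise, and `3` with the remaining
probability. The loss `u` is `2 / (k + 2)` if the past starts with a bad run of length `k`, i.e. a run
of a letter that is ended by a symbol with the other free letter, and `0` otherwise. Changing the past
beyond coordinate `n` changes `u` by `O(1 / n)` only, which gives `var_n log g ≤ 16 / n`
(`abs_log_runG_sub_le`).

Relative to `(1 / 2) ^ k`, a bad run of length `k` has weight `O(1 / k ^ 2)`, with a small and summable
constant, whereas a run of the free letter that reaches back to a marker costs nothing. Therefore,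
over a block of `n` merged symbols that is ended by the marker `e`, the free letter of `e` remains at
least three times as likely at the near end of the block, for every `n` (`measureReal_badSet_le`,
`measureReal_blockSet_other_le`). As the probability of the next `2` depends on that letter, it is at
least `7 / 32` after blocks ended by `2` and at most `5 / 32` after blocks ended by `3`. In the factor
these blocks are `0 … 0 1` and `0 … 0 2`, and both converge to `0 0 0 …`, so no continuous `g'` can
reproduce the conditional probabilities (`factor_close`).

The `g`-measures are the probability measures fixed by the dual transfer operator. One exists by
compactness (`exists_isGMeasure_runG`). It is unique because the marker `2` always has probability at
least `1 / 8` and hides the past beyond it, so that the iterates of the transfer operator contract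
oscillations by the factor `7 / 8` (`RenewsAfter.contract`, `isGMeasure_runG_unique`).
-/

open MeasureTheory Filter

/-- Prepending a symbol: `a·x = (a, x_0, x_1, …)`. -/
def prepend {S : Type} (a : S) (x : ℕ → S) : ℕ → S :=
  fun n => Nat.casesOn n a x

/-- The left shift `T : S^ℕ → S^ℕ`, `(Tx)_n = x_{n+1}`. -/
def shift {S : Type} (x : ℕ → S) : ℕ → S := fun n => x (n + 1)

/-- A `g`-function on `X = S^ℕ`: a continuous function `g : X → [0,1]` with
`∑_{a ∈ S} g(a·x) = 1` for all `x`. -/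
def IsGFunction {S : Type} [Fintype S] [TopologicalSpace S]
    (g : (ℕ → S) → ℝ) : Prop :=
  Continuous g ∧ (∀ x, g x ∈ Set.Icc (0 : ℝ) 1) ∧
    ∀ x : ℕ → S, ∑ a : S, g (prepend a x) = 1

/-- `μ` is a `g`-measure for `g`: a shift-invariant Borel probability measure such that
for every `a ∈ S` the function `x ↦ g(a·Tx)` is a version of the conditional expectation
of the indicator of `{x_0 = a}` given the σ-algebra generated by `(x_1, x_2, …)`. -/
def IsGMeasure {S : Type} [MeasurableSpace S]
    (g : (ℕ → S) → ℝ) (μ : Measure (ℕ → S)) : Prop :=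
  IsProbabilityMeasure μ ∧ μ.map shift = μ ∧
    ∀ a : S,
      (fun x : ℕ → S => g (prepend a (shift x)))
        =ᵐ[μ]
      μ[Set.indicator {x : ℕ → S | x 0 = a} (fun _ => (1 : ℝ)) |
          MeasurableSpace.comap shift MeasurableSpace.pi]

/-! ### The `g`-function -/

/-- The letter that is free after `t`: `0` after `0` and `2`, and `1` after `1` and `3`. -/
def freeLetter : Fin 4 → Fin 4 := ![0, 1, 0, 1]

/-- `y` starts with a run of exactly `n` equal letters from `{0, 1}`, and the symbol that ends this
run has the other letter as its free letter. Then necessarily `1 ≤ n`. -/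
def IsBadRun (n : ℕ) (y : ℕ → Fin 4) : Prop :=
  y 0 < 2 ∧ (∀ i < n, y i = y 0) ∧ freeLetter (y n) ≠ y 0

open Classical in
/-- The loss factor `2 / (k + 2)` if `y` starts with a bad run of length `k`, and `0` if it does not
(in particular if the initial run is infinite). -/
noncomputable def runLoss (y : ℕ → Fin 4) : ℝ :=
  if h : ∃ n, IsBadRun n y then 2 / ((h.choose : ℝ) + 2) else 0

/-- The probability of the symbol `s` after a past with first symbol `t` and loss factor `u`. -/
noncomputable def transProb (s t : Fin 4) (u : ℝ) : ℝ :=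
  if s = freeLetter t then (1 - u) / 2
  else if s < 2 then 1 / 16
  else if s = 2 then (if t = 0 then 1 / 4 else 1 / 8)
  else (if t = 0 then 3 / 16 else 5 / 16) + u / 2

/-- The `g`-function of the counterexample. -/
noncomputable def runG (x : ℕ → Fin 4) : ℝ := transProb (x 0) (x 1) (runLoss (shift x))

lemma freeLetter_lt (t : Fin 4) : freeLetter t < 2 := by
  fin_cases t <;> decide

lemma freeLetter_of_lt {t : Fin 4} (h : t < 2) : freeLetter t = t := by
  revert h; fin_cases t <;> decide

lemma IsBadRun.pos {n : ℕ} {y : ℕ → Fin 4} (h : IsBadRun n y) : 1 ≤ n := by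
  by_contra hn
  obtain rfl : n = 0 := by omega
  exact h.2.2 (freeLetter_of_lt h.1)

lemma IsBadRun.le {n m : ℕ} {y : ℕ → Fin 4} (h : IsBadRun n y) (h' : IsBadRun m y) : n ≤ m := by
  by_contra hn
  have h1 := h.2.1 m (by omega)
  exact h'.2.2 (by rw [h1]; exact freeLetter_of_lt h.1)

lemma runLoss_of_isBadRun {n : ℕ} {y : ℕ → Fin 4} (h : IsBadRun n y) :
    runLoss y = 2 / ((n : ℝ) + 2) := by
  have hex : ∃ n, IsBadRun n y := ⟨n, h⟩
  have : hex.choose = n := le_antisymm (hex.choose_spec.le h) (h.le hex.choose_spec)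
  rw [runLoss, dif_pos hex, this]

lemma runLoss_of_not {y : ℕ → Fin 4} (h : ¬ ∃ n, IsBadRun n y) : runLoss y = 0 := by
  rw [runLoss, dif_neg h]

lemma runLoss_nonneg (y : ℕ → Fin 4) : 0 ≤ runLoss y := by
  rw [runLoss]; split_ifs <;> positivity

/-- If no bad run is completed within the first `n` symbols, the loss is at most `2 / (n + 2)`. -/
lemma runLoss_le {n : ℕ} {y : ℕ → Fin 4} (h : ∀ k < n, ¬ IsBadRun k y) :
    runLoss y ≤ 2 / ((n : ℝ) + 2) := by
  by_cases hex : ∃ k, IsBadRun k y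
  · obtain ⟨k, hk⟩ := hex
    rw [runLoss_of_isBadRun hk]
    have : n ≤ k := by
      by_contra hlt
      exact h k (by omega) hk
    have : (n : ℝ) ≤ k := by exact_mod_cast this
    gcongr
  · rw [runLoss_of_not hex]; positivity

lemma runLoss_le_two_thirds (y : ℕ → Fin 4) : runLoss y ≤ 2 / 3 := by
  have := runLoss_le (n := 1) (y := y) (fun k hk hb => by have := hb.pos; omega)
  norm_num at this
  exact this

lemma IsBadRun.congr {k n : ℕ} {x y : ℕ → Fin 4} (hxy : ∀ i < n, x i = y i) (hk : k < n)
    (h : IsBadRun k x) : IsBadRun k y := by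
  have h0 := hxy 0 (by omega)
  refine ⟨h0 ▸ h.1, fun i hi => ?_, ?_⟩
  · rw [← hxy i (by omega), ← h0]; exact h.2.1 i hi
  · rw [← hxy k hk, ← h0]; exact h.2.2

lemma abs_runLoss_sub_le {n : ℕ} {x y : ℕ → Fin 4} (hxy : ∀ i < n, x i = y i) :
    |runLoss x - runLoss y| ≤ 2 / ((n : ℝ) + 2) := by
  by_cases h : ∃ k < n, IsBadRun k x
  · obtain ⟨k, hk, hb⟩ := h
    rw [runLoss_of_isBadRun hb, runLoss_of_isBadRun (hb.congr hxy hk), sub_self, abs_zero]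
    positivity
  · push Not at h
    have hx := runLoss_le h
    have hy := runLoss_le (n := n) (y := y)
      (fun k hk hb => h k hk (hb.congr (fun i hi => (hxy i hi).symm) hk))
    have := runLoss_nonneg x
    have := runLoss_nonneg y
    rw [abs_le]; constructor <;> linarith

/-- The symbol `2` hides everything beyond it from the loss factor. -/
lemma runLoss_congr {n j : ℕ} {x y : ℕ → Fin 4} (hxy : ∀ i < n, x i = y i) (hj : j < n)
    (hx : x j = 2) : runLoss x = runLoss y := by
  have key : ∀ {x : ℕ → Fin 4}, x j = 2 → ∀ k, IsBadRun k x → k < n := by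
    intro x hx k hb
    by_contra hk
    have h1 := hb.2.1 j (by omega)
    have h2 := hb.1
    rw [← h1, hx] at h2
    exact absurd h2 (by decide)
  by_cases h : ∃ k, IsBadRun k x
  · obtain ⟨k, hb⟩ := h
    rw [runLoss_of_isBadRun hb, runLoss_of_isBadRun (hb.congr hxy (key hx k hb))]
  · rw [runLoss_of_not h, runLoss_of_not]
    rintro ⟨k, hb⟩
    exact h ⟨k, hb.congr (fun i hi => (hxy i hi).symm)
      (key (by rw [← hxy j hj]; exact hx) k hb)⟩

lemma sum_transProb (t : Fin 4) (u : ℝ) : ∑ s, transProb s t u = 1 := by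
  fin_cases t <;> simp [Fin.sum_univ_four, transProb, freeLetter] <;> ring

lemma transProb_ge (s t : Fin 4) {u : ℝ} (h0 : 0 ≤ u) (h1 : u ≤ 2 / 3) :
    1 / 16 ≤ transProb s t u := by
  unfold transProb; split_ifs <;> linarith

lemma transProb_ge_eighth {s : Fin 4} (hs : 2 ≤ s) (t : Fin 4) {u : ℝ} (h0 : 0 ≤ u) :
    1 / 8 ≤ transProb s t u := by
  have h2 : s ≠ freeLetter t := fun h => by
    have := freeLetter_lt t
    rw [← h] at this
    exact absurd this (not_lt.2 hs)
  rw [transProb, if_neg h2, if_neg (not_lt.2 hs)]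
  split_ifs <;> linarith

lemma abs_transProb_sub_le (s t : Fin 4) (u v : ℝ) :
    |transProb s t u - transProb s t v| ≤ |u - v| / 2 := by
  unfold transProb
  split_ifs
  · rw [show (1 - u) / 2 - (1 - v) / 2 = -((u - v) / 2) by ring, abs_neg, abs_div, abs_two]
  · simp only [sub_self, abs_zero]; positivity
  · simp only [sub_self, abs_zero]; positivity
  · simp only [sub_self, abs_zero]; positivity
  · rw [add_sub_add_left_eq_sub, ← sub_div, abs_div, abs_two]
  · rw [add_sub_add_left_eq_sub, ← sub_div, abs_div, abs_two]

lemma shift_prepend {S : Type} (a : S) (x : ℕ → S) : shift (prepend a x) = x := rfl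

lemma runG_prepend (a : Fin 4) (x : ℕ → Fin 4) :
    runG (prepend a x) = transProb a (x 0) (runLoss x) := rfl

lemma prepend_shift {S : Type} (x : ℕ → S) : prepend (x 0) (shift x) = x := by
  funext n; cases n <;> rfl

lemma sum_runG (x : ℕ → Fin 4) : ∑ a, runG (prepend a x) = 1 := by
  simp only [runG_prepend, sum_transProb]

lemma runG_ge (x : ℕ → Fin 4) : 1 / 16 ≤ runG x :=
  transProb_ge _ _ (runLoss_nonneg _) (runLoss_le_two_thirds _)

lemma runG_le_one (x : ℕ → Fin 4) : runG x ≤ 1 := by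
  rw [← sum_runG (shift x)]
  conv_lhs => rw [← prepend_shift x]
  exact Finset.single_le_sum (f := fun a => runG (prepend a (shift x)))
    (fun a _ => le_trans (by norm_num) (runG_ge _)) (Finset.mem_univ (x 0))

lemma abs_runG_sub_le {n : ℕ} (hn : 1 ≤ n) {x y : ℕ → Fin 4} (hxy : ∀ i < n, x i = y i) :
    |runG x - runG y| ≤ 1 / n := by
  obtain rfl | h2 := hn.eq_or_lt
  · have := runG_ge x
    have := runG_ge y
    have := runG_le_one x
    have := runG_le_one y
    rw [abs_le]; constructor <;> norm_num <;> linarith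
  · obtain ⟨m, rfl⟩ : ∃ m, n = m + 1 := ⟨n - 1, by omega⟩
    have h := abs_runLoss_sub_le (n := m) (x := shift x) (y := shift y)
      (fun i hi => hxy (i + 1) (by omega))
    unfold runG
    rw [hxy 0 (by omega), hxy 1 (by omega)]
    refine (abs_transProb_sub_le _ _ _ _).trans ?_
    have h3 : (2 : ℝ) / (m + 2) / 2 ≤ 1 / ((m + 1 : ℕ) : ℝ) := by
      push_cast
      rw [div_div, div_le_div_iff₀ (by positivity) (by positivity)]
      nlinarith
    linarith

lemma abs_log_runG_sub_le {n : ℕ} (hn : 1 ≤ n) {x y : ℕ → Fin 4} (hxy : ∀ i < n, x i = y i) :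
    |Real.log (runG x) - Real.log (runG y)| ≤ 16 / n := by
  have key : ∀ a b : ℝ, 1 / 16 ≤ a → 1 / 16 ≤ b → Real.log a - Real.log b ≤ 16 * |a - b| := by
    intro a b ha hb
    have hb0 : 0 < b := by linarith
    rw [← Real.log_div (by linarith) hb0.ne']
    refine (Real.log_le_sub_one_of_pos (div_pos (by linarith) hb0)).trans ?_
    rw [div_sub_one hb0.ne', div_le_iff₀ hb0]
    nlinarith [le_abs_self (a - b), abs_nonneg (a - b)]
  have h := abs_runG_sub_le hn hxy
  have h1 := key _ _ (runG_ge x) (runG_ge y)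
  have h2 := key _ _ (runG_ge y) (runG_ge x)
  rw [abs_sub_comm (runG y)] at h2
  have h3 : (16 : ℝ) / n = 16 * (1 / n) := by ring
  rw [abs_le]; constructor <;> linarith

/-- Functions on a sequence space over a discrete alphabet are continuous if their variations
`var_n` tend to `0`. -/
lemma continuous_of_agree {S : Type} [TopologicalSpace S] [DiscreteTopology S] {f : (ℕ → S) → ℝ}
    (h : ∀ ε > 0, ∃ n, ∀ x y : ℕ → S, (∀ i < n, x i = y i) → |f x - f y| < ε) :
    Continuous f := by
  rw [continuous_iff_continuousAt]
  intro x
  rw [ContinuousAt, Metric.tendsto_nhds]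
  intro ε hε
  obtain ⟨n, hn⟩ := h ε hε
  have : ∀ᶠ y in nhds x, ∀ i < n, y i = x i := by
    have h1 : ∀ i, ∀ᶠ y in nhds x, y i = x i := fun i =>
      (continuous_apply i).continuousAt.eventually
        (show ∀ᶠ z in nhds (x i), z = x i by simp [nhds_discrete])
    have := (Finset.eventually_all (Finset.range n) (l := nhds x)
      (p := fun i y => y i = x i)).2 (fun i _ => h1 i)
    simpa using this
  filter_upwards [this] with y hy
  rw [Real.dist_eq]
  exact hn y x hy

lemma continuous_runG : Continuous runG := by
  refine continuous_of_agree fun ε hε => ?_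
  obtain ⟨n, hn⟩ := exists_nat_one_div_lt hε
  refine ⟨n + 1, fun x y hxy => (abs_runG_sub_le (by omega) hxy).trans_lt ?_⟩
  exact_mod_cast hn

lemma isGFunction_runG : IsGFunction runG :=
  ⟨continuous_runG, fun x => ⟨le_trans (by norm_num) (runG_ge x), runG_le_one x⟩, sum_runG⟩

/-! ### The transfer operator and its action on measures -/

lemma measurable_shift {S : Type} [MeasurableSpace S] :
    Measurable (shift : (ℕ → S) → ℕ → S) :=
  measurable_pi_lambda _ fun n => measurable_pi_apply (n + 1)

lemma measurable_prepend {S : Type} [MeasurableSpace S] (a : S) :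
    Measurable (prepend a : (ℕ → S) → ℕ → S) := by
  refine measurable_pi_lambda _ fun n => ?_
  cases n with
  | zero => exact measurable_const
  | succ n => exact measurable_pi_apply n

lemma measurableSet_first {S : Type} [MeasurableSpace S] [DiscreteMeasurableSpace S] (a : S) :
    MeasurableSet {x : ℕ → S | x 0 = a} :=
  measurable_pi_apply (X := fun _ : ℕ => S) 0 (MeasurableSet.of_discrete (s := {a}))

lemma continuous_prepend {S : Type} [TopologicalSpace S] (a : S) :
    Continuous (prepend a : (ℕ → S) → ℕ → S) := by
  refine continuous_pi fun n => ?_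
  cases n with
  | zero => exact continuous_const
  | succ n => exact continuous_apply n

/-- The transfer operator `L f (x) = ∑ a, g (a·x) f (a·x)`. -/
noncomputable def transferOp {S : Type} [Fintype S] (g f : (ℕ → S) → ℝ) (x : ℕ → S) : ℝ :=
  ∑ a, g (prepend a x) * f (prepend a x)

/-- The dual of the transfer operator: the law of `a·x`, where `x` is drawn from `μ` and then `a`
with probability `g (a·x)`. -/
noncomputable def transferMeasure {S : Type} [Fintype S] [MeasurableSpace S]
    (g : (ℕ → S) → ℝ) (μ : Measure (ℕ → S)) : Measure (ℕ → S) :=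
  ∑ a, (μ.withDensity fun x => ENNReal.ofReal (g (prepend a x))).map (prepend a)

section General

set_option linter.unusedSectionVars false

variable {S : Type} [Fintype S] [MeasurableSpace S] [DiscreteMeasurableSpace S]
  [TopologicalSpace S] [DiscreteTopology S] {g : (ℕ → S) → ℝ} {μ : Measure (ℕ → S)}

lemma continuous_transferOp (hg : IsGFunction g) {f : (ℕ → S) → ℝ} (hf : Continuous f) :
    Continuous (transferOp g f) :=
  continuous_finsetSum _ fun a _ =>
    (hg.1.comp (continuous_prepend a)).mul (hf.comp (continuous_prepend a))

lemma measurable_g_prepend (hg : IsGFunction g) (a : S) :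
    Measurable fun x => g (prepend a x) :=
  (hg.1.comp (continuous_prepend a)).measurable

lemma integrable_of_continuous [IsFiniteMeasure μ] {f : (ℕ → S) → ℝ} (hf : Continuous f) :
    Integrable f μ := by
  have : IntegrableOn f Set.univ μ := hf.continuousOn.integrableOn_compact isCompact_univ
  rwa [integrableOn_univ] at this

lemma transferMeasure_apply (g : (ℕ → S) → ℝ) (μ : Measure (ℕ → S)) {B : Set (ℕ → S)}
    (hB : MeasurableSet B) :
    transferMeasure g μ B = ∑ a, ∫⁻ x in prepend a ⁻¹' B, ENNReal.ofReal (g (prepend a x)) ∂μ := by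
  rw [transferMeasure, Measure.finsetSum_apply]
  refine Finset.sum_congr rfl fun a _ => ?_
  rw [Measure.map_apply (measurable_prepend a) hB,
    withDensity_apply _ (measurable_prepend a hB)]

lemma isProbabilityMeasure_transferMeasure (hg : IsGFunction g) [IsProbabilityMeasure μ] :
    IsProbabilityMeasure (transferMeasure g μ) := by
  constructor
  rw [transferMeasure_apply g μ MeasurableSet.univ]
  simp only [Set.preimage_univ, Measure.restrict_univ]
  rw [← lintegral_finsetSum _ fun a _ => (measurable_g_prepend hg a).ennreal_ofReal]
  have : ∀ x, ∑ a, ENNReal.ofReal (g (prepend a x)) = 1 := fun x => by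
    rw [← ENNReal.ofReal_sum_of_nonneg fun a _ => (hg.2.1 _).1, hg.2.2, ENNReal.ofReal_one]
  simp [this]

lemma integral_transferMeasure (hg : IsGFunction g) [IsFiniteMeasure μ] {f : (ℕ → S) → ℝ}
    (hf : Continuous f) :
    ∫ x, f x ∂(transferMeasure g μ) = ∫ x, transferOp g f x ∂μ := by
  have hInt : ∀ a, Integrable (fun x => g (prepend a x) * f (prepend a x)) μ := fun a =>
    integrable_of_continuous
      ((hg.1.comp (continuous_prepend a)).mul (hf.comp (continuous_prepend a)))
  have hfin : ∀ a, IsFiniteMeasure (μ.withDensity fun x => ENNReal.ofReal (g (prepend a x))) :=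
    fun a => isFiniteMeasure_withDensity_ofReal
      (integrable_of_continuous (hg.1.comp (continuous_prepend a))).2
  unfold transferMeasure transferOp
  rw [integral_finsetSum_measure fun a _ => integrable_of_continuous hf,
    integral_finsetSum _ fun a _ => hInt a]
  refine Finset.sum_congr rfl fun a _ => ?_
  rw [integral_map (measurable_prepend a).aemeasurable hf.measurable.aestronglyMeasurable,
    integral_withDensity_eq_integral_toReal_smul
      (measurable_g_prepend hg a).ennreal_ofReal (by simp)]
  refine integral_congr_ae (.of_forall fun x => ?_)
  simp [ENNReal.toReal_ofReal (hg.2.1 (prepend a x)).1]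

/-- The defining property of the conditional expectation, as an identity of measures of sets. -/
lemma IsGMeasure.measure_inter (hg : IsGFunction g) (h : IsGMeasure g μ) (a : S)
    {B : Set (ℕ → S)} (hB : MeasurableSet B) :
    μ ({x | x 0 = a} ∩ shift ⁻¹' B) = ∫⁻ x in B, ENNReal.ofReal (g (prepend a x)) ∂μ := by
  obtain ⟨hp, hinv, hc⟩ := h
  have hm : MeasurableSpace.comap shift MeasurableSpace.pi
      ≤ (MeasurableSpace.pi : MeasurableSpace (ℕ → S)) := measurable_shift.comap_le
  have ha : MeasurableSet {x : ℕ → S | x 0 = a} :=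
    measurableSet_first a
  have hcont : Continuous fun x => g (prepend a x) := hg.1.comp (continuous_prepend a)
  have h1 := setIntegral_condExp hm (μ := μ) (s := shift ⁻¹' B)
    ((integrable_const (1 : ℝ)).indicator ha) ⟨B, hB, rfl⟩
  rw [← setIntegral_congr_ae (measurable_shift hB) ((hc a).mono fun x hx _ => hx),
    integral_indicator_const _ ha] at h1
  have h2 : ∫ x in shift ⁻¹' B, g (prepend a (shift x)) ∂μ = ∫ x in B, g (prepend a x) ∂μ := by
    conv_rhs => rw [← hinv]
    exact (setIntegral_map hB hcont.measurable.aestronglyMeasurable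
      measurable_shift.aemeasurable).symm
  rw [h2, smul_eq_mul, mul_one, measureReal_restrict_apply ha] at h1
  rw [← ofReal_integral_eq_lintegral_ofReal (integrable_of_continuous hcont).integrableOn
    (.of_forall fun x => (hg.2.1 _).1)]
  rw [h1, ofReal_measureReal]

lemma IsGMeasure.measureReal_inter (hg : IsGFunction g) (h : IsGMeasure g μ) (a : S)
    {B : Set (ℕ → S)} (hB : MeasurableSet B) :
    μ.real ({x | x 0 = a} ∩ shift ⁻¹' B) = ∫ x in B, g (prepend a x) ∂μ := by
  have := h.1
  have hcont : Continuous fun x => g (prepend a x) := hg.1.comp (continuous_prepend a)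
  rw [Measure.real, h.measure_inter hg a hB, ← ofReal_integral_eq_lintegral_ofReal
    (integrable_of_continuous hcont).integrableOn (.of_forall fun x => (hg.2.1 _).1),
    ENNReal.toReal_ofReal]
  exact integral_nonneg fun x => (hg.2.1 _).1

lemma IsGMeasure.measureReal_inter_of_const (hg : IsGFunction g) (h : IsGMeasure g μ) (a : S)
    {B : Set (ℕ → S)} (hB : MeasurableSet B) {r : ℝ} (hr : ∀ x ∈ B, g (prepend a x) = r) :
    μ.real ({x | x 0 = a} ∩ shift ⁻¹' B) = r * μ.real B := by
  rw [h.measureReal_inter hg a hB, setIntegral_congr_fun hB hr, setIntegral_const, smul_eq_mul,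
    mul_comm]

lemma IsGMeasure.transferMeasure_eq (hg : IsGFunction g) (h : IsGMeasure g μ) :
    transferMeasure g μ = μ := by
  ext B hB
  rw [transferMeasure_apply g μ hB]
  have ha : ∀ a : S, MeasurableSet {x : ℕ → S | x 0 = a} := fun a =>
    measurableSet_first a
  have hdec : B = ⋃ a ∈ (Finset.univ : Finset S),
      ({x | x 0 = a} ∩ shift ⁻¹' (prepend a ⁻¹' B)) := by
    ext x
    simp only [Finset.mem_univ, Set.iUnion_true, Set.mem_iUnion, Set.mem_inter_iff,
      Set.mem_ofPred_eq, Set.mem_preimage]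
    constructor
    · exact fun hx => ⟨x 0, rfl, by rwa [prepend_shift]⟩
    · rintro ⟨a, rfl, hx⟩
      rwa [prepend_shift] at hx
  conv_rhs => rw [hdec]
  rw [measure_biUnion_finset]
  · exact Finset.sum_congr rfl fun a _ =>
      (h.measure_inter hg a (measurable_prepend a hB)).symm
  · intro a _ b _ hab
    refine Set.disjoint_left.2 fun x hx hx' => hab ?_
    exact hx.1.symm.trans hx'.1
  · exact fun a _ => (ha a).inter (measurable_shift (measurable_prepend a hB))

lemma isGMeasure_of_transferMeasure_eq (hg : IsGFunction g) [IsProbabilityMeasure μ]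
    (h : transferMeasure g μ = μ) : IsGMeasure g μ := by
  have ha : ∀ a : S, MeasurableSet {x : ℕ → S | x 0 = a} := fun a =>
    measurableSet_first a
  have key : ∀ (a : S) {B : Set (ℕ → S)}, MeasurableSet B →
      μ ({x | x 0 = a} ∩ shift ⁻¹' B) = ∫⁻ x in B, ENNReal.ofReal (g (prepend a x)) ∂μ := by
    intro a B hB
    conv_lhs => rw [← h]
    rw [transferMeasure_apply g μ ((ha a).inter (measurable_shift hB)),
      Finset.sum_eq_single a]
    · congr 2
      ext x
      exact ⟨fun hx => hx.2, fun hx => ⟨rfl, hx⟩⟩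
    · intro b _ hb
      have : prepend b ⁻¹' ({x : ℕ → S | x 0 = a} ∩ shift ⁻¹' B) = ∅ := by
        ext x
        simp only [Set.mem_preimage, Set.mem_inter_iff, Set.mem_empty_iff_false, iff_false]
        exact fun hx => hb hx.1
      rw [this]; simp
    · simp
  have hinv : μ.map shift = μ := by
    ext B hB
    rw [Measure.map_apply measurable_shift hB]
    conv_lhs => rw [← h]
    rw [transferMeasure_apply g μ (measurable_shift hB)]
    have h1 : ∀ a : S, prepend a ⁻¹' (shift ⁻¹' B) = B := fun a => rfl
    simp only [h1]
    rw [← lintegral_finsetSum _ fun a _ => (measurable_g_prepend hg a).ennreal_ofReal]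
    have : ∀ x, ∑ a, ENNReal.ofReal (g (prepend a x)) = 1 := fun x => by
      rw [← ENNReal.ofReal_sum_of_nonneg fun a _ => (hg.2.1 _).1, hg.2.2, ENNReal.ofReal_one]
    simp [this]
  refine ⟨inferInstance, hinv, fun a => ?_⟩
  have hm : MeasurableSpace.comap shift MeasurableSpace.pi
      ≤ (MeasurableSpace.pi : MeasurableSpace (ℕ → S)) := measurable_shift.comap_le
  have hcont : Continuous fun x => g (prepend a x) := hg.1.comp (continuous_prepend a)
  have hsm : StronglyMeasurable[MeasurableSpace.comap shift MeasurableSpace.pi]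
      fun x : ℕ → S => g (prepend a (shift x)) :=
    ((measurable_g_prepend hg a).comp (comap_measurable shift)).stronglyMeasurable
  have hInt : Integrable (fun x : ℕ → S => g (prepend a (shift x))) μ := by
    have h1 : Integrable (fun x => g (prepend a x)) (μ.map shift) := by
      rw [hinv]; exact integrable_of_continuous hcont
    exact h1.comp_measurable measurable_shift
  refine ae_eq_condExp_of_forall_setIntegral_eq hm
    ((integrable_const (1 : ℝ)).indicator (ha a)) (fun s _ _ => hInt.integrableOn) ?_
    hsm.aestronglyMeasurable
  rintro _ ⟨B, hB, rfl⟩ -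
  have h2 : ∫ x in shift ⁻¹' B, g (prepend a (shift x)) ∂μ = ∫ x in B, g (prepend a x) ∂μ := by
    conv_rhs => rw [← hinv]
    exact (setIntegral_map hB hcont.measurable.aestronglyMeasurable
      measurable_shift.aemeasurable).symm
  rw [h2, integral_indicator_const _ (ha a), smul_eq_mul, mul_one,
    measureReal_restrict_apply (ha a), Measure.real, key a hB,
    ← ofReal_integral_eq_lintegral_ofReal (integrable_of_continuous hcont).integrableOn
    (.of_forall fun x => (hg.2.1 _).1), ENNReal.toReal_ofReal]
  exact integral_nonneg fun x => (hg.2.1 _).1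

/-- Two probability measures agree if they agree on indicators depending on finitely many
coordinates. -/
lemma measure_ext_of_cylinders {μ ν : Measure (ℕ → S)} [IsProbabilityMeasure μ]
    [IsProbabilityMeasure ν]
    (h : ∀ (m : ℕ) (f : (ℕ → S) → ℝ), Continuous f → (∀ x, f x ∈ Set.Icc (0 : ℝ) 1) →
      (∀ x y, (∀ i < m, x i = y i) → f x = f y) → ∫ x, f x ∂μ = ∫ x, f x ∂ν) : μ = ν := by
  refine ext_of_generate_finite (measurableCylinders fun _ : ℕ => S)
    generateFrom_measurableCylinders.symm isPiSystem_measurableCylinders ?_ (by simp)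
  intro t ht
  have htm := MeasurableSet.of_mem_measurableCylinders ht
  rw [measurableCylinders_nat] at ht
  simp only [Set.mem_iUnion, Set.mem_singleton_iff, exists_prop] at ht
  obtain ⟨m, s, -, rfl⟩ := ht
  set t := cylinder (α := fun _ : ℕ => S) (Finset.Iic m) s with ht
  have hloc : ∀ x y : ℕ → S, (∀ i < m + 1, x i = y i) →
      t.indicator (fun _ => (1 : ℝ)) x = t.indicator (fun _ => (1 : ℝ)) y := by
    intro x y hxy
    have : (Finset.Iic m).restrict x = (Finset.Iic m).restrict y := by
      funext i
      exact hxy i (Nat.lt_succ_of_le (Finset.mem_Iic.1 i.2))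
    have h2 : x ∈ t ↔ y ∈ t := by rw [ht, mem_cylinder, mem_cylinder, this]
    by_cases hx : x ∈ t
    · rw [Set.indicator_of_mem hx, Set.indicator_of_mem (h2.1 hx)]
    · rw [Set.indicator_of_notMem hx, Set.indicator_of_notMem (fun hy => hx (h2.2 hy))]
  have := h (m + 1) (t.indicator fun _ => (1 : ℝ))
    (continuous_of_agree fun ε hε => ⟨m + 1, fun x y hxy => by
      rw [hloc x y hxy, sub_self, abs_zero]; exact hε⟩)
    (fun x => by by_cases hx : x ∈ t <;> simp [hx]) hloc
  rw [integral_indicator_const _ htm, integral_indicator_const _ htm, smul_eq_mul, smul_eq_mul,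
    mul_one, mul_one] at this
  rw [← ofReal_measureReal, this, ofReal_measureReal]

end General

/-! ### Existence and uniqueness of the `g`-measure -/

/-- `f x` is determined by any initial segment of `x` that has length at least `m` and contains the
symbol `2`. -/
def RenewsAfter (m : ℕ) (f : (ℕ → Fin 4) → ℝ) : Prop :=
  ∀ x y : ℕ → Fin 4, ∀ N, m ≤ N → (∀ i < N, x i = y i) → (∃ j < N, x j = 2) → f x = f y

lemma RenewsAfter.transferOp {m : ℕ} {f : (ℕ → Fin 4) → ℝ} (h : RenewsAfter m f) :
    RenewsAfter (m - 1) (transferOp runG f) := by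
  rintro x y N hN hxy ⟨j, hj, hx⟩
  refine Finset.sum_congr rfl fun a _ => ?_
  rw [runG_prepend, runG_prepend, hxy 0 (by omega), runLoss_congr hxy hj hx,
    h (prepend a x) (prepend a y) (N + 1) (by omega) ?_ ⟨j + 1, by omega, hx⟩]
  intro i hi
  cases i with
  | zero => rfl
  | succ i => exact hxy i (by omega)

lemma RenewsAfter.iterate {m : ℕ} {f : (ℕ → Fin 4) → ℝ} (h : RenewsAfter m f) (n : ℕ) :
    RenewsAfter (m - n) ((_root_.transferOp runG)^[n] f) := by
  induction n with
  | zero => exact h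
  | succ n ih =>
    rw [Function.iterate_succ_apply', ← Nat.sub_sub]
    exact ih.transferOp

lemma transferOp_mem_Icc {f : (ℕ → Fin 4) → ℝ} {l u : ℝ} (h : ∀ x, f x ∈ Set.Icc l u)
    (x : ℕ → Fin 4) : transferOp runG f x ∈ Set.Icc l u := by
  have hg : ∀ a, 0 ≤ runG (prepend a x) := fun a => le_trans (by norm_num) (runG_ge _)
  constructor
  · calc l = ∑ a, runG (prepend a x) * l := by rw [← Finset.sum_mul, sum_runG, one_mul]
      _ ≤ _ := Finset.sum_le_sum fun a _ => mul_le_mul_of_nonneg_left (h _).1 (hg a)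
  · calc _ ≤ ∑ a, runG (prepend a x) * u :=
          Finset.sum_le_sum fun a _ => mul_le_mul_of_nonneg_left (h _).2 (hg a)
      _ = u := by rw [← Finset.sum_mul, sum_runG, one_mul]

/-- Doeblin contraction: the symbol `2` has probability at least `1 / 8` after any past, and a
function that renews at `2` does not see what lies beyond it. -/
lemma RenewsAfter.contract {f : (ℕ → Fin 4) → ℝ} (h : RenewsAfter 0 f) {l D : ℝ}
    (hf : ∀ x, f x ∈ Set.Icc l (l + D)) :
    ∃ l', ∀ x, _root_.transferOp runG f x ∈ Set.Icc l' (l' + 7 / 8 * D) := by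
  set v := f (prepend 2 fun _ => 0) with hv
  have h2 : ∀ x, f (prepend 2 x) = v := fun x =>
    h _ _ 1 (by omega) (fun i hi => by obtain rfl : i = 0 := by omega
                                       rfl) ⟨0, by omega, rfl⟩
  refine ⟨l + (v - l) / 8, fun x => ?_⟩
  have hsum := sum_runG x
  have h8 : 1 / 8 ≤ runG (prepend 2 x) := transProb_ge_eighth le_rfl _ (runLoss_nonneg x)
  have hg : ∀ a, 0 ≤ runG (prepend a x) := fun a => le_trans (by norm_num) (runG_ge _)
  have hvl : v ∈ Set.Icc l (l + D) := hf _
  unfold _root_.transferOp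
  rw [Fin.sum_univ_four] at hsum ⊢
  rw [h2]
  have b0 := hf (prepend 0 x)
  have b1 := hf (prepend 1 x)
  have b3 := hf (prepend 3 x)
  have g0 := hg 0
  have g1 := hg 1
  have g3 := hg 3
  generalize runG (prepend 0 x) = p0 at *
  generalize runG (prepend 1 x) = p1 at *
  generalize runG (prepend 2 x) = p2 at *
  generalize runG (prepend 3 x) = p3 at *
  obtain rfl : p2 = 1 - p0 - p1 - p3 := by linarith
  constructor
  · have e0 := mul_nonneg g0 (sub_nonneg.2 b0.1)
    have e1 := mul_nonneg g1 (sub_nonneg.2 b1.1)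
    have e3 := mul_nonneg g3 (sub_nonneg.2 b3.1)
    have e2 := mul_nonneg (sub_nonneg.2 h8) (sub_nonneg.2 hvl.1)
    nlinarith
  · have e0 := mul_nonneg g0 (sub_nonneg.2 b0.2)
    have e1 := mul_nonneg g1 (sub_nonneg.2 b1.2)
    have e3 := mul_nonneg g3 (sub_nonneg.2 b3.2)
    have e2 := mul_nonneg (sub_nonneg.2 h8) (sub_nonneg.2 hvl.2)
    nlinarith

lemma iterate_transferOp_mem_Icc {m : ℕ} {f : (ℕ → Fin 4) → ℝ}
    (hf : ∀ x, f x ∈ Set.Icc (0 : ℝ) 1)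
    (hloc : ∀ x y : ℕ → Fin 4, (∀ i < m, x i = y i) → f x = f y) (n : ℕ) :
    ∃ l, ∀ x, (transferOp runG)^[n + m] f x ∈ Set.Icc l (l + (7 / 8) ^ n) := by
  have hR : RenewsAfter m f := fun x y N hN hxy _ => hloc x y fun i hi => hxy i (by omega)
  induction n with
  | zero =>
    refine ⟨0, ?_⟩
    rw [zero_add, pow_zero, zero_add]
    generalize m = k
    induction k with
    | zero => exact hf
    | succ k ih =>
      rw [Function.iterate_succ_apply']
      exact transferOp_mem_Icc ih
  | succ n ih =>
    obtain ⟨l, hl⟩ := ih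
    have h0 : RenewsAfter 0 ((transferOp runG)^[n + m] f) := by
      have := hR.iterate (n + m)
      rwa [show m - (n + m) = 0 by omega] at this
    obtain ⟨l', hl'⟩ := h0.contract hl
    refine ⟨l', ?_⟩
    rw [show n + 1 + m = n + m + 1 by omega, Function.iterate_succ_apply', pow_succ']
    exact hl'

lemma continuous_iterate_transferOp {f : (ℕ → Fin 4) → ℝ} (hf : Continuous f) (n : ℕ) :
    Continuous ((transferOp runG)^[n] f) := by
  induction n with
  | zero => exact hf
  | succ n ih =>
    rw [Function.iterate_succ_apply']
    exact continuous_transferOp isGFunction_runG ih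

lemma integral_iterate_transferOp {μ : Measure (ℕ → Fin 4)} (h : IsGMeasure runG μ)
    {f : (ℕ → Fin 4) → ℝ} (hf : Continuous f) (n : ℕ) :
    ∫ x, (transferOp runG)^[n] f x ∂μ = ∫ x, f x ∂μ := by
  have := h.1
  induction n with
  | zero => rfl
  | succ n ih =>
    rw [Function.iterate_succ_apply', ← integral_transferMeasure isGFunction_runG
      (continuous_iterate_transferOp hf n), h.transferMeasure_eq isGFunction_runG, ih]

lemma integral_mem_Icc {μ : Measure (ℕ → Fin 4)} [IsProbabilityMeasure μ]
    {f : (ℕ → Fin 4) → ℝ} (hf : Continuous f) {l u : ℝ} (h : ∀ x, f x ∈ Set.Icc l u) :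
    ∫ x, f x ∂μ ∈ Set.Icc l u := by
  constructor
  · have := integral_mono (μ := μ) (integrable_const l) (integrable_of_continuous hf)
      fun x => (h x).1
    simpa using this
  · have := integral_mono (μ := μ) (integrable_of_continuous hf) (integrable_const u)
      fun x => (h x).2
    simpa using this

lemma tendsto_seven_eighths : Tendsto (fun n : ℕ => (7 / 8 : ℝ) ^ n) atTop (nhds 0) :=
  tendsto_pow_atTop_nhds_zero_of_lt_one (by norm_num) (by norm_num)

lemma isGMeasure_runG_unique {μ ν : Measure (ℕ → Fin 4)} (hμ : IsGMeasure runG μ)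
    (hν : IsGMeasure runG ν) : μ = ν := by
  have := hμ.1
  have := hν.1
  refine measure_ext_of_cylinders fun m f hc hf hloc => ?_
  have key : ∀ n : ℕ, |∫ x, f x ∂μ - ∫ x, f x ∂ν| ≤ (7 / 8 : ℝ) ^ n := by
    intro n
    obtain ⟨l, hl⟩ := iterate_transferOp_mem_Icc hf hloc n
    have hc' := continuous_iterate_transferOp hc (n + m)
    have h1 := integral_mem_Icc (μ := μ) hc' hl
    have h2 := integral_mem_Icc (μ := ν) hc' hl
    rw [integral_iterate_transferOp hμ hc] at h1
    rw [integral_iterate_transferOp hν hc] at h2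
    rw [abs_le]
    constructor <;> linarith [h1.1, h1.2, h2.1, h2.2]
  have h0 := ge_of_tendsto' tendsto_seven_eighths key
  exact sub_eq_zero.1 (abs_nonpos_iff.1 h0)

/-- An ultrafilter limit of the iterates of a Dirac measure under the dual transfer operator is fixed by
that operator, because the oscillation of the iterated transfer operator vanishes. -/
lemma exists_isGMeasure_runG : ∃ μ, IsGMeasure runG μ := by
  set ν : ℕ → Measure (ℕ → Fin 4) := fun n =>
    (transferMeasure runG)^[n] (Measure.dirac fun _ => 0) with hν
  have hsucc : ∀ n, ν (n + 1) = transferMeasure runG (ν n) := fun n => by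
    rw [hν]; exact Function.iterate_succ_apply' _ _ _
  have hp : ∀ n, IsProbabilityMeasure (ν n) := by
    intro n
    induction n with
    | zero => exact Measure.dirac.isProbabilityMeasure
    | succ n ih => rw [hsucc]; exact isProbabilityMeasure_transferMeasure isGFunction_runG
  have hInt : ∀ n (f : (ℕ → Fin 4) → ℝ), Continuous f →
      ∫ x, f x ∂(ν n) = (transferOp runG)^[n] f fun _ => 0 := by
    intro n
    induction n with
    | zero =>
      intro f hf
      exact integral_dirac f _
    | succ n ih =>
      intro f hf
      rw [hsucc, integral_transferMeasure isGFunction_runG hf,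
        ih _ (continuous_transferOp isGFunction_runG hf), Function.iterate_succ_apply]
  set P : ℕ → ProbabilityMeasure (ℕ → Fin 4) := fun n => ⟨ν n, hp n⟩ with hP
  obtain ⟨μ, hμ⟩ : ∃ μ, Tendsto P (hyperfilter ℕ : Filter ℕ) (nhds μ) :=
    ⟨_, ((hyperfilter ℕ).map P).le_nhds_lim⟩
  have hlim : ∀ f : (ℕ → Fin 4) → ℝ, Continuous f →
      Tendsto (fun n => ∫ x, f x ∂(ν n)) (hyperfilter ℕ : Filter ℕ)
        (nhds (∫ x, f x ∂(μ : Measure (ℕ → Fin 4)))) := fun f hf =>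
    ProbabilityMeasure.tendsto_iff_forall_integral_tendsto.1 hμ
      (BoundedContinuousFunction.mkOfCompact ⟨f, hf⟩)
  refine ⟨μ, isGMeasure_of_transferMeasure_eq isGFunction_runG ?_⟩
  have := isProbabilityMeasure_transferMeasure (μ := (μ : Measure (ℕ → Fin 4))) isGFunction_runG
  refine measure_ext_of_cylinders fun m f hc hf hloc => ?_
  have hLc := continuous_transferOp isGFunction_runG hc
  rw [integral_transferMeasure isGFunction_runG hc]
  have h1 := (hlim _ hLc).sub (hlim _ hc)
  have h2 : Tendsto (fun n => ∫ x, transferOp runG f x ∂(ν n) - ∫ x, f x ∂(ν n)) atTop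
      (nhds 0) := by
    rw [← tendsto_add_atTop_iff_nat m]
    refine squeeze_zero_norm (fun n => ?_) tendsto_seven_eighths
    obtain ⟨l, hl⟩ := iterate_transferOp_mem_Icc hf hloc n
    have a1 := hl fun _ => 0
    have a2 := transferOp_mem_Icc hl fun _ => 0
    rw [hInt _ _ hLc, hInt _ _ hc, ← Function.iterate_succ_apply, Function.iterate_succ_apply',
      Real.norm_eq_abs, abs_le]
    constructor <;> linarith [a1.1, a1.2, a2.1, a2.2]
  exact sub_eq_zero.1 (tendsto_nhds_unique h1 (h2.mono_left Nat.hyperfilter_le_atTop))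

/-! ### The two phases over the merged symbol -/

/-- The sequences that start with exactly `n` letters from `{0, 1}`, followed by `e`
(for `e ∈ {2, 3}`). -/
def blockSet (e : Fin 4) (n : ℕ) : Set (ℕ → Fin 4) := {x | (∀ i < n, x i < 2) ∧ x n = e}

/-- The sequences that start with `n` copies of the free letter of `e`, followed by `e`. -/
def pureSet (e : Fin 4) (n : ℕ) : Set (ℕ → Fin 4) := {x | (∀ i < n, x i = freeLetter e) ∧ x n = e}

/-- The sequences in `blockSet e n` that start with a bad run of length `k` of the letter `s`. -/
def badSet (e : Fin 4) (n k : ℕ) (s : Fin 4) : Set (ℕ → Fin 4) :=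
  {x | x ∈ blockSet e n ∧ x 0 = s ∧ IsBadRun k x}

lemma measurableSet_coord (n : ℕ) (q : Fin 4 → Prop) : MeasurableSet {x : ℕ → Fin 4 | q (x n)} :=
  measurable_pi_apply (X := fun _ : ℕ => Fin 4) n (MeasurableSet.of_discrete (s := {a | q a}))

lemma measurableSet_coords (n : ℕ) (q : Fin 4 → Prop) :
    MeasurableSet {x : ℕ → Fin 4 | ∀ i < n, q (x i)} := by
  have : {x : ℕ → Fin 4 | ∀ i < n, q (x i)} = ⋂ i, ⋂ _ : i < n, {x | q (x i)} := by
    ext x; simp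
  rw [this]
  exact .iInter fun i => .iInter fun _ => measurableSet_coord i q

lemma measurableSet_blockSet (e : Fin 4) (n : ℕ) : MeasurableSet (blockSet e n) :=
  (measurableSet_coords n (· < 2)).inter (measurableSet_coord n (· = e))

lemma measurableSet_pureSet (e : Fin 4) (n : ℕ) : MeasurableSet (pureSet e n) :=
  (measurableSet_coords n (· = freeLetter e)).inter (measurableSet_coord n (· = e))

lemma measurableSet_badSet (e : Fin 4) (n k : ℕ) (s : Fin 4) : MeasurableSet (badSet e n k s) := by
  have : badSet e n k s = blockSet e n ∩ ({x | x 0 = s} ∩ ({x | x 0 < 2} ∩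
      ({x | ∀ i < k, x i = s} ∩ {x | freeLetter (x k) ≠ s}))) := by
    ext x
    constructor
    · rintro ⟨h1, h2, h3, h4, h5⟩
      rw [h2] at h4 h5
      exact ⟨h1, h2, h3, h4, h5⟩
    · rintro ⟨h1, h2, h3, h4, h5⟩
      have h2' : x 0 = s := h2
      refine ⟨h1, h2, h3, ?_, ?_⟩
      · rw [h2']; exact h4
      · rw [h2']; exact h5
  rw [this]
  exact (measurableSet_blockSet e n).inter ((measurableSet_first s).inter
    ((measurableSet_coord 0 (· < 2)).inter ((measurableSet_coords k (· = s)).inter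
      (measurableSet_coord k (fun a => freeLetter a ≠ s)))))

lemma pureSet_subset_blockSet (e : Fin 4) (n : ℕ) : pureSet e n ⊆ blockSet e n :=
  fun _ hx => ⟨fun i hi => by rw [hx.1 i hi]; exact freeLetter_lt e, hx.2⟩

lemma not_isBadRun_of_mem_pureSet {e : Fin 4} (he : 2 ≤ e) {n : ℕ} {x : ℕ → Fin 4}
    (hx : x ∈ pureSet e n) (k : ℕ) : ¬ IsBadRun k x := by
  intro hb
  have hn : 0 < n := by
    by_contra h
    obtain rfl : n = 0 := by omega
    exact absurd hb.1 (by rw [hx.2]; exact not_lt.2 he)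
  have h0 := hx.1 0 hn
  rcases lt_trichotomy k n with hk | rfl | hk
  · refine hb.2.2 ?_
    rw [hx.1 k hk, h0, freeLetter_of_lt (freeLetter_lt e)]
  · exact hb.2.2 (by rw [hx.2, h0])
  · have h1 := hb.2.1 n hk
    rw [hx.2] at h1
    exact absurd hb.1 (by rw [← h1]; exact not_lt.2 he)

lemma freeLetter_of_mem_pureSet {e : Fin 4} {n : ℕ} {x : ℕ → Fin 4} (hx : x ∈ pureSet e n) :
    freeLetter (x 0) = freeLetter e := by
  cases n with
  | zero => rw [hx.2]
  | succ n => rw [hx.1 0 (by omega), freeLetter_of_lt (freeLetter_lt e)]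

lemma mem_pureSet_or_isBadRun {e : Fin 4} {n : ℕ} {x : ℕ → Fin 4} (hx : x ∈ blockSet e n) :
    x ∈ pureSet e n ∨ ∃ k ∈ Finset.range (n + 1), IsBadRun k x := by
  rcases Nat.eq_zero_or_pos n with rfl | hn
  · exact .inl ⟨fun i hi => absurd hi (by omega), hx.2⟩
  have h0 := hx.1 0 hn
  by_cases h : ∃ j, j ≤ n ∧ freeLetter (x j) ≠ x 0
  · right
    obtain ⟨hj1, hj2⟩ := Nat.find_spec h
    refine ⟨Nat.find h, Finset.mem_range.2 (by omega), h0, fun i hi => ?_, hj2⟩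
    have := Nat.find_min h hi
    push Not at this
    rw [← this (by omega), freeLetter_of_lt (hx.1 i (by omega))]
  · left
    push Not at h
    have he : freeLetter e = x 0 := by rw [← hx.2]; exact h n le_rfl
    refine ⟨fun i hi => ?_, hx.2⟩
    rw [he, ← h i hi.le, freeLetter_of_lt (hx.1 i hi)]

/-- The sum telescopes to `2 - 2 / (n + 1)`; the junk term at `k = 0` is `0`. -/
lemma sum_two_div_le (n : ℕ) :
    ∑ k ∈ Finset.range (n + 1), (2 : ℝ) / (k * (k + 1)) ≤ 2 := by
  have : ∑ k ∈ Finset.range (n + 1), (2 : ℝ) / (k * (k + 1)) = 2 - 2 / (n + 1) := by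
    induction n with
    | zero => norm_num
    | succ n ih =>
      rw [Finset.sum_range_succ, ih]
      push_cast
      field_simp
      ring
  rw [this]
  have : (0 : ℝ) ≤ 2 / (n + 1) := by positivity
  linarith

section Estimate

variable {μ : Measure (ℕ → Fin 4)} {e : Fin 4}

lemma measureReal_pureSet (hμ : IsGMeasure runG μ) (he : 2 ≤ e) (n : ℕ) :
    μ.real (pureSet e n) = (1 / 2) ^ n * μ.real {x | x 0 = e} := by
  induction n with
  | zero =>
    have : pureSet e 0 = {x | x 0 = e} := by ext x; simp [pureSet]
    rw [this, pow_zero, one_mul]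
  | succ n ih =>
    have hset : pureSet e (n + 1) = {x | x 0 = freeLetter e} ∩ shift ⁻¹' pureSet e n := by
      ext x
      constructor
      · exact fun hx => ⟨hx.1 0 (by omega), fun i hi => hx.1 (i + 1) (by omega), hx.2⟩
      · rintro ⟨h0, h1, h2⟩
        refine ⟨fun i hi => ?_, h2⟩
        cases i with
        | zero => exact h0
        | succ i => exact h1 i (by omega)
    rw [hset, hμ.measureReal_inter_of_const isGFunction_runG _ (measurableSet_pureSet e n)
      (r := 1 / 2), ih, pow_succ']
    · ring
    · intro x hx
      rw [runG_prepend, runLoss_of_not fun ⟨k, hk⟩ => not_isBadRun_of_mem_pureSet he hx k hk,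
        transProb, if_pos (freeLetter_of_mem_pureSet hx).symm, sub_zero]

lemma sum_bound {n : ℕ} {s : Fin 4} {c : ℝ} (hc : 0 ≤ c)
    (h : ∀ k, μ.real (badSet e n k s) ≤ 1 / 6 * (2 / (k * (k + 1))) * c) :
    μ.real (⋃ k ∈ Finset.range (n + 1), badSet e n k s) ≤ 1 / 3 * c := by
  refine (measureReal_biUnion_finset_le _ _).trans ((Finset.sum_le_sum fun k _ => h k).trans ?_)
  rw [← Finset.sum_mul, ← Finset.mul_sum]
  have := mul_le_mul_of_nonneg_right (sum_two_div_le n) hc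
  linarith

/-- A bad run of length `k` costs the factor `2 / (k * (k + 1))`, uniformly in the block length `n`.
The constant `1 / 6` reproduces itself under a switch of letters: `1 / 16` is `1 / 8` of the free
probability `1 / 2`, and `1 / 8 * (1 + 2 * (1 / 6)) = 1 / 6`. -/
lemma measureReal_badSet_le (hμ : IsGMeasure runG μ) (he : 2 ≤ e) (n : ℕ) :
    ∀ (k : ℕ) (s : Fin 4), μ.real (badSet e n k s) ≤
      1 / 6 * (2 / (k * (k + 1))) * ((1 / 2) ^ n * μ.real {x | x 0 = e}) := by
  have := hμ.1
  induction n with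
  | zero =>
    intro k s
    have : badSet e 0 k s = ∅ := by
      ext x
      simp only [Set.mem_empty_iff_false, iff_false]
      rintro ⟨h1, -, h3⟩
      exact absurd h3.1 (by rw [h1.2]; exact not_lt.2 he)
    rw [this, measureReal_empty]
    positivity
  | succ n ih =>
    intro k s
    set c : ℝ := (1 / 2) ^ n * μ.real {x | x 0 = e} with hc
    have hc0 : 0 ≤ c := by positivity
    rw [pow_succ', mul_assoc (1 / 2 : ℝ) ((1 / 2) ^ n), ← hc]
    by_cases hs : s < 2
    swap
    · have : badSet e (n + 1) k s = ∅ := by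
        ext x
        simp only [Set.mem_empty_iff_false, iff_false]
        rintro ⟨-, h2, h3⟩
        exact hs (h2 ▸ h3.1)
      rw [this, measureReal_empty]
      positivity
    rcases k with _ | _ | k
    · have : badSet e (n + 1) 0 s = ∅ := by
        ext x
        simp only [Set.mem_empty_iff_false, iff_false]
        rintro ⟨-, -, h3⟩
        exact absurd h3.pos (by omega)
      rw [this, measureReal_empty]
      positivity
    -- A run of length `1` arises by a switch of letters.
    · set B : Set (ℕ → Fin 4) := blockSet e n ∩ {y | freeLetter (y 0) ≠ s} with hB
      have hBm : MeasurableSet B :=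
        (measurableSet_blockSet e n).inter (measurableSet_coord 0 (fun a => freeLetter a ≠ s))
      have hsub : badSet e (n + 1) (0 + 1) s ⊆ {x | x 0 = s} ∩ shift ⁻¹' B := by
        rintro x ⟨h1, h2, h3⟩
        refine ⟨h2, ⟨fun i hi => h1.1 (i + 1) (by omega), h1.2⟩, ?_⟩
        rw [← h2]
        exact h3.2.2
      have hcov : B ⊆ pureSet e n ∪ ⋃ k ∈ Finset.range (n + 1), badSet e n k (1 - s) := by
        rintro y ⟨hy, hys⟩
        rcases mem_pureSet_or_isBadRun hy with h | ⟨k, hk, hb⟩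
        · exact .inl h
        · refine .inr (Set.mem_biUnion (Finset.mem_coe.2 hk) ⟨hy, ?_, hb⟩)
          have h1 := hb.1
          have h2 : freeLetter (y 0) ≠ s := hys
          rw [freeLetter_of_lt h1] at h2
          generalize y 0 = a at *
          clear hsub hB hBm hys ih
          revert a s; decide
      have hBle : μ.real B ≤ c + 1 / 3 * c := by
        refine (measureReal_mono hcov).trans ((measureReal_union_le _ _).trans ?_)
        rw [measureReal_pureSet hμ he n]
        exact add_le_add le_rfl (sum_bound hc0 fun k => ih k _)
      refine (measureReal_mono hsub).trans ?_
      rw [hμ.measureReal_inter_of_const isGFunction_runG _ hBm (r := 1 / 16)]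
      · push_cast
        linarith
      · rintro y ⟨-, hy⟩
        have hy' : freeLetter (y 0) ≠ s := hy
        rw [runG_prepend, transProb, if_neg hy'.symm, if_pos hs]
    -- A longer run arises by one more copy of its letter.
    · have hsub : badSet e (n + 1) (k + 1 + 1) s ⊆
          {x | x 0 = s} ∩ shift ⁻¹' badSet e n (k + 1) s := by
        rintro x ⟨h1, h2, h3⟩
        have hx1 : shift x 0 = x 0 := h3.2.1 1 (by omega)
        refine ⟨h2, ⟨fun i hi => h1.1 (i + 1) (by omega), h1.2⟩, hx1.trans h2, ?_, ?_, ?_⟩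
        · rw [hx1]; exact h3.1
        · intro i hi
          rw [hx1]; exact h3.2.1 (i + 1) (by omega)
        · rw [hx1]; exact h3.2.2
      refine (measureReal_mono hsub).trans ?_
      rw [hμ.measureReal_inter_of_const isGFunction_runG _ (measurableSet_badSet e n (k + 1) s)
        (r := (1 - 2 / (((k + 1 : ℕ) : ℝ) + 2)) / 2)]
      · have h1 := ih (k + 1) s
        have hk : (0 : ℝ) ≤ (1 - 2 / (((k + 1 : ℕ) : ℝ) + 2)) / 2 := by
          have : (2 : ℝ) / (((k + 1 : ℕ) : ℝ) + 2) ≤ 1 := by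
            rw [div_le_one (by positivity)]
            push_cast
            have : (0 : ℝ) ≤ k := by positivity
            linarith
          linarith
        refine (mul_le_mul_of_nonneg_left h1 hk).trans (le_of_eq ?_)
        push_cast
        field_simp
        ring
      · rintro y ⟨-, h2, h3⟩
        rw [runG_prepend, runLoss_of_isBadRun h3, transProb, if_pos]
        rw [h2, freeLetter_of_lt hs]

/-- Below a block ended by `e`, the free letter of `e` is at least three times as likely as the
other letter. -/
lemma measureReal_blockSet_other_le (hμ : IsGMeasure runG μ) (he : 2 ≤ e) (n : ℕ) :
    3 * μ.real (blockSet e n ∩ {x | x 0 = 1 - freeLetter e}) ≤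
      μ.real (blockSet e n ∩ {x | x 0 = freeLetter e}) ∨ n = 0 := by
  have := hμ.1
  rcases Nat.eq_zero_or_pos n with h | hn
  · exact .inr h
  left
  set c : ℝ := (1 / 2) ^ n * μ.real {x | x 0 = e} with hc
  have hlow : c ≤ μ.real (blockSet e n ∩ {x | x 0 = freeLetter e}) := by
    rw [hc, ← measureReal_pureSet hμ he n]
    exact measureReal_mono fun x hx => ⟨pureSet_subset_blockSet e n hx, hx.1 0 hn⟩
  have hup : μ.real (blockSet e n ∩ {x | x 0 = 1 - freeLetter e}) ≤ 1 / 3 * c := by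
    refine (measureReal_mono ?_ (measure_ne_top _ _)).trans
      (sum_bound (by positivity) fun k => measureReal_badSet_le hμ he n k (1 - freeLetter e))
    rintro x ⟨hx, hx0⟩
    have hx0' : x 0 = 1 - freeLetter e := hx0
    rcases mem_pureSet_or_isBadRun hx with h | ⟨k, hk, hb⟩
    · have h1 := h.1 0 hn
      rw [hx0'] at h1
      exact absurd h1 (by revert he; clear * -; revert e; decide)
    · exact Set.mem_biUnion (Finset.mem_coe.2 hk) ⟨hx, hx0, hb⟩
  linarith

lemma measureReal_blockSet_pos (hμ : IsGMeasure runG μ) (he : 2 ≤ e) (n : ℕ) :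
    0 < μ.real (blockSet e n) := by
  have := hμ.1
  refine lt_of_lt_of_le ?_ (measureReal_mono (pureSet_subset_blockSet e n))
  rw [measureReal_pureSet hμ he n]
  have h1 := hμ.measureReal_inter isGFunction_runG e MeasurableSet.univ
  rw [Set.preimage_univ, Set.inter_univ, Measure.restrict_univ] at h1
  have h2 : 1 / 16 ≤ μ.real {x | x 0 = e} := by
    rw [h1]
    exact (integral_mem_Icc (continuous_runG.comp (continuous_prepend e))
      fun x => ⟨runG_ge _, runG_le_one _⟩).1
  have : 0 < μ.real {x | x 0 = e} := by linarith
  positivity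

lemma measureReal_blockSet_eq [IsFiniteMeasure μ] {n : ℕ} (hn : 1 ≤ n) :
    μ.real (blockSet e n) =
      μ.real (blockSet e n ∩ {x | x 0 = 0}) + μ.real (blockSet e n ∩ {x | x 0 = 1}) := by
  rw [← measureReal_union]
  · congr 1
    ext x
    constructor
    · intro hx
      have h0 := hx.1 0 hn
      have : x 0 = 0 ∨ x 0 = 1 := by
        generalize x 0 = a at *
        revert a; decide
      exact this.imp (fun h => ⟨hx, h⟩) (fun h => ⟨hx, h⟩)
    · rintro (hx | hx) <;> exact hx.1
  · refine Set.disjoint_left.2 fun x hx hx' => ?_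
    exact absurd (hx.2.symm.trans hx'.2 : (0 : Fin 4) = 1) (by decide)
  · exact (measurableSet_blockSet e n).inter (measurableSet_first 1)

/-- After a block the symbol `2` has probability `1 / 4` or `1 / 8`, according to the first letter
of the block. -/
lemma measureReal_two_blockSet (hμ : IsGMeasure runG μ) {n : ℕ} (hn : 1 ≤ n) :
    μ.real ({x | x 0 = 2} ∩ shift ⁻¹' blockSet e n) =
      1 / 4 * μ.real (blockSet e n ∩ {x | x 0 = 0}) +
      1 / 8 * μ.real (blockSet e n ∩ {x | x 0 = 1}) := by
  have := hμ.1
  have hm : ∀ a : Fin 4, MeasurableSet (blockSet e n ∩ {x | x 0 = a}) := fun a =>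
    (measurableSet_blockSet e n).inter (measurableSet_first a)
  rw [← hμ.measureReal_inter_of_const isGFunction_runG 2 (hm 0),
    ← hμ.measureReal_inter_of_const isGFunction_runG 2 (hm 1), ← measureReal_union]
  · congr 1
    rw [← Set.inter_union_distrib_left, ← Set.preimage_union, ← Set.inter_union_distrib_left]
    ext x
    constructor
    · rintro ⟨h2, hx⟩
      refine ⟨h2, hx, ?_⟩
      have h0 := hx.1 0 hn
      have : shift x 0 = 0 ∨ shift x 0 = 1 := by
        generalize shift x 0 = a at *
        revert a; decide
      exact this
    · rintro ⟨h2, hx, -⟩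
      exact ⟨h2, hx⟩
  · refine Set.disjoint_left.2 fun x hx hx' => ?_
    exact absurd (hx.2.2.symm.trans hx'.2.2 : (0 : Fin 4) = 1) (by decide)
  · exact (measurableSet_first 2).inter (measurable_shift (hm 1))
  · rintro x ⟨-, hx⟩
    have hx' : x 0 = 1 := hx
    rw [runG_prepend, hx']
    simp [transProb, freeLetter]
  · rintro x ⟨-, hx⟩
    have hx' : x 0 = 0 := hx
    rw [runG_prepend, hx']
    simp [transProb, freeLetter]

end Estimate

/-! ### The factor -/

/-- The factor map merges the letters `0` and `1`. -/
def mergeMap : Fin 4 → Fin 3 := ![0, 0, 1, 2]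

lemma preimage_block {e : Fin 4} (he : 2 ≤ e) (n : ℕ) :
    (fun (x : ℕ → Fin 4) (i : ℕ) => mergeMap (x i)) ⁻¹'
      {y | (∀ i < n, y i = 0) ∧ y n = mergeMap e} = blockSet e n := by
  have h1 : ∀ a : Fin 4, mergeMap a = 0 ↔ a < 2 := by decide
  have h2 : ∀ a : Fin 4, mergeMap a = mergeMap e ↔ a = e := by
    clear h1; revert e; decide
  ext x
  simp only [Set.mem_preimage, Set.mem_ofPred_eq, h1, h2, blockSet]

/-- If the factor measure had a continuous `g'`, the probability of `2` after a long block would be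
close to `g' (1, 0, 0, …)`, no matter how the block ends. -/
lemma factor_close {μ : Measure (ℕ → Fin 4)} [IsProbabilityMeasure μ] {g' : (ℕ → Fin 3) → ℝ}
    (hg' : IsGFunction g')
    (hν : IsGMeasure g' (μ.map fun (x : ℕ → Fin 4) (i : ℕ) => mergeMap (x i)))
    {ε : ℝ} (hε : 0 < ε) :
    ∃ n, 1 ≤ n ∧ ∀ e : Fin 4, 2 ≤ e →
      |μ.real ({x | x 0 = 2} ∩ shift ⁻¹' blockSet e n) -
        g' (prepend 1 fun _ => 0) * μ.real (blockSet e n)| ≤ ε * μ.real (blockSet e n) := by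
  have hΦ : Measurable fun (x : ℕ → Fin 4) (i : ℕ) => mergeMap (x i) :=
    measurable_pi_lambda _ fun i =>
      (Measurable.of_discrete (f := mergeMap)).comp (measurable_pi_apply i)
  set ν := μ.map fun (x : ℕ → Fin 4) (i : ℕ) => mergeMap (x i) with hνdef
  have := hν.1
  have hcont : Continuous fun y => g' (prepend 1 y) := hg'.1.comp (continuous_prepend 1)
  obtain ⟨n, hn1, hn⟩ : ∃ n, 1 ≤ n ∧ ∀ y : ℕ → Fin 3, (∀ i < n, y i = 0) →
      |g' (prepend 1 y) - g' (prepend 1 fun _ => 0)| ≤ ε := by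
    have h1 := Metric.tendsto_nhds.1 (hcont.tendsto fun _ => 0) ε hε
    obtain ⟨_, ⟨x, n, rfl⟩, hx, hsub⟩ :=
      (PiNat.isTopologicalBasis_cylinders fun _ : ℕ => Fin 3).mem_nhds_iff.1 h1
    refine ⟨n + 1, by omega, fun y hy => ?_⟩
    have : y ∈ PiNat.cylinder x n := by
      intro i hi
      rw [hy i (by omega)]
      exact hx i hi
    have := hsub this
    exact le_of_lt this
  refine ⟨n, hn1, fun e he => ?_⟩
  set B : Set (ℕ → Fin 3) := {y | (∀ i < n, y i = 0) ∧ y n = mergeMap e} with hB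
  have hBm : MeasurableSet B := by
    have : B = (⋂ i, ⋂ _ : i < n, {y | y i = 0}) ∩ {y | y n = mergeMap e} := by
      ext y; simp [hB]
    have hc : ∀ (i : ℕ) (a : Fin 3), MeasurableSet {y : ℕ → Fin 3 | y i = a} := fun i a =>
      measurable_pi_apply (X := fun _ : ℕ => Fin 3) i (MeasurableSet.of_discrete (s := {a}))
    rw [this]
    exact (MeasurableSet.iInter fun i => .iInter fun _ => hc i 0).inter (hc n _)
  have hpre := preimage_block he n
  have hνB : ν.real B = μ.real (blockSet e n) := by
    rw [hνdef, map_measureReal_apply hΦ hBm, hpre]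
  have hν2 : ν.real ({y | y 0 = 1} ∩ shift ⁻¹' B) =
      μ.real ({x | x 0 = 2} ∩ shift ⁻¹' blockSet e n) := by
    rw [hνdef, map_measureReal_apply hΦ ((measurableSet_first 1).inter (measurable_shift hBm)),
      ← hpre]
    congr 1
    ext x
    have h1 : ∀ a : Fin 4, mergeMap a = 1 ↔ a = 2 := by decide
    exact and_congr (h1 (x 0)) Iff.rfl
  rw [← hνB, ← hν2, hν.measureReal_inter hg' 1 hBm]
  have hc : g' (prepend 1 fun _ => 0) * ν.real B = ∫ _ in B, g' (prepend 1 fun _ => 0) ∂ν := by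
    rw [setIntegral_const, smul_eq_mul, mul_comm]
  rw [hc, ← integral_sub (integrable_of_continuous hcont).integrableOn (integrable_const _)]
  rw [← Real.norm_eq_abs]
  refine norm_setIntegral_le_of_norm_le_const (measure_lt_top _ _) fun y hy => ?_
  rw [Real.norm_eq_abs]
  exact hn y (show y ∈ B from hy).1

/-- **Theorem 4 (counterexample to Verbitskiy's conjecture).**  There are a four-symbol
alphabet `S`, a strictly positive `g`-function `g` on `X = S^ℕ` with
`var_n log g ≤ C/n` (hence `∑ (var_n log g)² < ∞`) admitting exactly one `g`-measure
`μ`, and a surjection `π` onto a three-symbol alphabet `S̃`, such that the 1-block factor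
`μ∘π̂⁻¹` is not a `g`-measure for any `g`-function on `S̃^ℕ`. -/
theorem exists_factor_of_g_measure_not_g_measure :
    ∃ (g : (ℕ → Fin 4) → ℝ) (C : ℝ), 0 < C ∧
      IsGFunction g ∧ (∀ x, 0 < g x) ∧
      -- `var_n log g ≤ C / n` for all `n ≥ 1`:
      (∀ n : ℕ, 1 ≤ n → ∀ x y : ℕ → Fin 4,
        (∀ i, i < n → x i = y i) → |Real.log (g x) - Real.log (g y)| ≤ C / n) ∧
      -- `g` admits exactly one `g`-measure:
      (∃! μ : Measure (ℕ → Fin 4), IsGMeasure g μ) ∧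
      -- but some one-block factor of it is not a `g`-measure:
      ∃ p : Fin 4 → Fin 3, Function.Surjective p ∧
        ∀ μ : Measure (ℕ → Fin 4), IsGMeasure g μ →
          ¬ ∃ g' : (ℕ → Fin 3) → ℝ,
              IsGFunction g' ∧
              IsGMeasure g' (μ.map fun (x : ℕ → Fin 4) (i : ℕ) => p (x i)) := by
  refine ⟨runG, 16, by norm_num, isGFunction_runG,
    fun x => lt_of_lt_of_le (by norm_num) (runG_ge x),
    fun n hn x y hxy => abs_log_runG_sub_le hn hxy, ?_, mergeMap, by decide, ?_⟩
  · obtain ⟨μ, hμ⟩ := exists_isGMeasure_runG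
    exact ⟨μ, hμ, fun ν hν => isGMeasure_runG_unique hν hμ⟩
  · rintro μ hμ ⟨g', hg', hν⟩
    have := hμ.1
    obtain ⟨n, hn, h⟩ := factor_close hg' hν (ε := 1 / 64) (by norm_num)
    have key2 := h 2 le_rfl
    have key3 := h 3 (by decide)
    have pos2 := measureReal_blockSet_pos hμ (e := 2) le_rfl n
    have pos3 := measureReal_blockSet_pos hμ (e := 3) (by decide) n
    have o2 := (measureReal_blockSet_other_le hμ (e := 2) le_rfl n).resolve_right (by omega)
    have o3 := (measureReal_blockSet_other_le hμ (e := 3) (by decide) n).resolve_right (by omega)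
    rw [show freeLetter 2 = 0 from rfl, show (1 : Fin 4) - 0 = 1 from rfl] at o2
    rw [show freeLetter 3 = 1 from rfl, show (1 : Fin 4) - 1 = 0 from rfl] at o3
    rw [measureReal_two_blockSet hμ hn] at key2 key3
    rw [measureReal_blockSet_eq hn] at key2 key3 pos2 pos3
    -- The probability of `2` is at least `7 / 32` after a block ended by `2`,
    -- and at most `5 / 32` after a block ended by `3`.
    have l2 : 7 / 32 ≤ g' (prepend 1 fun _ => 0) + 1 / 64 := by
      have := (abs_le.1 key2).2
      refine le_of_mul_le_mul_right ?_ pos2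
      linarith
    have l3 : g' (prepend 1 fun _ => 0) - 1 / 64 ≤ 5 / 32 := by
      have := (abs_le.1 key3).1
      refine le_of_mul_le_mul_right ?_ pos3
      linarith
    linarith
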